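/- arXiv:2110.14387 — 2 statements merged into one kernel-verified Lean document; each statement's English description precedes it below -/
import Mathlib

section
/- Let X be a normed complex vector space, let G be a group acting on X by linear isometries, let x ∈ X, let F ⊆ G be a finite nonempty subset, and set y = |F|^{-1} ∑_{g ∈ F} g·x. Then for every k ∈ G one has ‖k·y − y‖ ≤ 2 ‖x‖ · |kF △ F| / |F|, where kF △ F denotes the symmetric difference of the sets kF = {kg : g ∈ F} and F. -/
open scoped symmDiff

/-!
Left translation by `k` turns the sum of the orbit of `x` over `F` into the sum over `kF`. The two
sums share the terms indexed by `kF ∩ F`, so their difference consists of `|kF ∆ F|` terms, each of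
norm at most a bound for the orbit of `x`. Dividing by `|F|` gives the estimate, in fact with
`‖x‖` in place of `2 * ‖x‖` when the action is isometric.
-/

theorem norm_sum_sub_sum_le_sum_norm_symmDiff {ι E : Type*} [SeminormedAddCommGroup E]
    [DecidableEq ι] (f : ι → E) (s t : Finset ι) :
    ‖∑ i ∈ s, f i - ∑ i ∈ t, f i‖ ≤ ∑ i ∈ s ∆ t, ‖f i‖ :=
  calc ‖∑ i ∈ s, f i - ∑ i ∈ t, f i‖
      = ‖∑ i ∈ s \ t, f i - ∑ i ∈ t \ s, f i‖ := by rw [Finset.sum_sdiff_sub_sum_sdiff]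
    _ ≤ ‖∑ i ∈ s \ t, f i‖ + ‖∑ i ∈ t \ s, f i‖ := norm_sub_le _ _
    _ ≤ ∑ i ∈ s \ t, ‖f i‖ + ∑ i ∈ t \ s, ‖f i‖ :=
      add_le_add (norm_sum_le _ _) (norm_sum_le _ _)
    _ = ∑ i ∈ s ∆ t, ‖f i‖ := (Finset.sum_union disjoint_sdiff_sdiff).symm

theorem norm_sum_sub_sum_le_mul_card_symmDiff {ι E : Type*} [SeminormedAddCommGroup E]
    [DecidableEq ι] {f : ι → E} {s t : Finset ι} {C : ℝ} (hf : ∀ i ∈ s ∆ t, ‖f i‖ ≤ C) :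
    ‖∑ i ∈ s, f i - ∑ i ∈ t, f i‖ ≤ C * (s ∆ t).card :=
  calc ‖∑ i ∈ s, f i - ∑ i ∈ t, f i‖
      ≤ ∑ i ∈ s ∆ t, ‖f i‖ := norm_sum_sub_sum_le_sum_norm_symmDiff f s t
    _ ≤ (s ∆ t).card • C := Finset.sum_le_card_nsmul _ _ _ hf
    _ = C * (s ∆ t).card := by rw [nsmul_eq_mul, mul_comm]

/-- The average `|F|⁻¹ ∑_{g ∈ F} ρ(g) x` of the orbit of `x` over a finite set `F`; it is `0` for
empty `F`. -/
def orbitAverage {𝕜 M X : Type*} [DivisionRing 𝕜] [Monoid M] [AddCommGroup X] [Module 𝕜 X]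
    (ρ : Representation 𝕜 M X) (F : Finset M) (x : X) : X :=
  (F.card : 𝕜)⁻¹ • ∑ g ∈ F, ρ g x

theorem card_smul_orbitAverage {𝕜 M X : Type*} [DivisionRing 𝕜] [CharZero 𝕜] [Monoid M]
    [AddCommGroup X] [Module 𝕜 X] (ρ : Representation 𝕜 M X) {F : Finset M} (hF : F.Nonempty)
    (x : X) :
    (F.card : 𝕜) • orbitAverage ρ F x = ∑ g ∈ F, ρ g x :=
  smul_inv_smul₀ (Nat.cast_ne_zero.mpr hF.card_ne_zero) _

theorem representation_apply_sum_orbit {R M X : Type*} [Semiring R] [Monoid M] [IsLeftCancelMul M]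
    [DecidableEq M] [AddCommMonoid X] [Module R X] (ρ : Representation R M X) (F : Finset M)
    (k : M) (x : X) :
    ρ k (∑ g ∈ F, ρ g x) = ∑ g ∈ F.image (fun g => k * g), ρ g x := by
  rw [map_sum, Finset.sum_image (mul_right_injective k).injOn]
  simp only [map_mul, Module.End.mul_apply]

/-- The linear representation underlying an action by surjective linear isometries. -/
def isometricRepresentation {R G X : Type*} [Semiring R] [Monoid G] [SeminormedAddCommGroup X]
    [Module R X] (α : G →* (X ≃ₗᵢ[R] X)) : Representation R G X where
  toFun g := (α g).toLinearEquiv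
  map_one' := by rw [map_one]; rfl
  map_mul' g h := by rw [map_mul]; rfl

theorem norm_isometricRepresentation_apply {R G X : Type*} [Semiring R] [Monoid G]
    [SeminormedAddCommGroup X] [Module R X] (α : G →* (X ≃ₗᵢ[R] X)) (g : G) (x : X) :
    ‖isometricRepresentation α g x‖ = ‖x‖ :=
  (α g).norm_map x

theorem stmt3_general {𝕜 X M : Type*} [RCLike 𝕜] [SeminormedAddCommGroup X] [NormedSpace 𝕜 X]
    [Monoid M] [IsLeftCancelMul M] [DecidableEq M] (ρ : Representation 𝕜 M X) {x : X} {C : ℝ}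
    (hC : ∀ g, ‖ρ g x‖ ≤ C) {F : Finset M} (hF : F.Nonempty) (k : M) :
    ‖ρ k (orbitAverage ρ F x) - orbitAverage ρ F x‖
      ≤ C * ((F.image fun g => k * g) ∆ F).card / F.card := by
  have card_pos : (0 : ℝ) < F.card := Nat.cast_pos.mpr hF.card_pos
  rw [le_div_iff₀' card_pos]
  calc F.card * ‖ρ k (orbitAverage ρ F x) - orbitAverage ρ F x‖
      = ‖(F.card : 𝕜) • (ρ k (orbitAverage ρ F x) - orbitAverage ρ F x)‖ := by
        rw [norm_smul, RCLike.norm_natCast]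
    _ = ‖∑ g ∈ F.image (fun g => k * g), ρ g x - ∑ g ∈ F, ρ g x‖ := by
        rw [smul_sub, ← map_smul, card_smul_orbitAverage ρ hF, representation_apply_sum_orbit]
    _ ≤ C * ((F.image fun g => k * g) ∆ F).card :=
        norm_sum_sub_sum_le_mul_card_symmDiff fun g _ => hC g

/-- If a group `G` acts on a normed complex vector space `X` by linear
isometries, `x ∈ X`, `F ⊆ G` is a finite nonempty subset and
`y = |F|⁻¹ • ∑_{g ∈ F} g • x`, then for every `k ∈ G` one has
`‖k • y − y‖ ≤ 2‖x‖ · |kF △ F| / |F|`. -/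
theorem stmt3 {X G : Type*} [NormedAddCommGroup X] [NormedSpace ℂ X]
    [Group G] [DecidableEq G]
    (α : G →* (X ≃ₗᵢ[ℂ] X))
    (x : X) (F : Finset G) (hF : F.Nonempty) (k : G)
    (y : X) (hy : y = (F.card : ℂ)⁻¹ • ∑ g ∈ F, α g x) :
    ‖α k y - y‖ ≤ 2 * ‖x‖ * ((F.image fun g => k * g) ∆ F).card / F.card := by
  have norm_orbit_le (g : G) : ‖isometricRepresentation α g x‖ ≤ 2 * ‖x‖ := by
    linarith [norm_isometricRepresentation_apply α g x, norm_nonneg x]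
  exact hy ▸ stmt3_general (isometricRepresentation α) norm_orbit_le hF k
end

section
/- Assume the relations (R1)–(R4) and suppose in addition that b = t·1 for some real number t with 0 < t < 1. Define c_{j,k} = (t − t²)^{-1} · s f_{1,j} s* f_{1,k} and d_l = (t^{1/2}(1 − t))^{-1} · s f_{1,l} for 1 ≤ j, k, l ≤ n. Then s = t^{1/2} ∑_{j=1}^n c_{j,1}* d_j, and f_{j,k} = ∑_{l=1}^n c_{l,j}* c_{l,k} + (1 − t) d_j* d_k for all 1 ≤ j, k ≤ n. -/
/-!
Let `a = ∑ⱼ f j j` and `e = s* s = 1 - a`. The relations make `a` central among the `f j k`, with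
`f j o * f o k = a * f j k`. Multiplying `b = t` on the left by `f o k` gives
`s s* f o k = (t - e) * f o k`; as `e * s = 0`, this yields `s * e = t s`, so `t⁻¹ e` is a
projection. The two summands of `f j k` are its parts in the complementary corners:
`∑ₗ c_{l,j}* c_{l,k} = (1 - t⁻¹ e) * f j k` and `(1 - t) d_j* d_k = t⁻¹ e * f j k`.
-/

open Finset

/-- The multiplicative relations satisfied by the images `f j k` of the matrix units under a
completely positive order zero map; genuine matrix units are the case where the `f j j` are
idempotent. -/
structure IsOrderZeroMatrixUnits {ι A : Type*} [DecidableEq ι] [NonUnitalNonAssocSemiring A]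
    (f : ι → ι → A) : Prop where
  mul_eq_ite : ∀ j k l m, f j k * f l m = if k = l then f j j * f j m else 0

namespace IsOrderZeroMatrixUnits

section NonAssoc

variable {ι A : Type*} [DecidableEq ι] [NonUnitalNonAssocSemiring A] {f : ι → ι → A}

theorem mul_of_ne (hf : IsOrderZeroMatrixUnits f) {k l : ι} (hkl : k ≠ l) (j m : ι) :
    f j k * f l m = 0 := by
  rw [hf.mul_eq_ite, if_neg hkl]

theorem mul_same (hf : IsOrderZeroMatrixUnits f) (j k m : ι) :
    f j k * f k m = f j j * f j m := by
  rw [hf.mul_eq_ite, if_pos rfl]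

variable [Fintype ι]

theorem sum_diag_mul (hf : IsOrderZeroMatrixUnits f) (j k : ι) :
    (∑ i, f i i) * f j k = f j j * f j k := by
  rw [sum_mul]
  exact Fintype.sum_eq_single j fun i hij ↦ hf.mul_of_ne hij i k

theorem mul_sum_diag (hf : IsOrderZeroMatrixUnits f) (j k : ι) :
    f j k * ∑ i, f i i = f j j * f j k := by
  rw [mul_sum, Fintype.sum_eq_single k fun i hik ↦ hf.mul_of_ne hik.symm j i, hf.mul_same]

theorem commute_sum_diag (hf : IsOrderZeroMatrixUnits f) (j k : ι) :
    Commute (∑ i, f i i) (f j k) :=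
  (hf.sum_diag_mul j k).trans (hf.mul_sum_diag j k).symm

theorem mul_eq_sum_diag_mul (hf : IsOrderZeroMatrixUnits f) (j i k : ι) :
    f j i * f i k = (∑ i, f i i) * f j k := by
  rw [hf.mul_same, hf.sum_diag_mul]

end NonAssoc

theorem mul_mul_of_commute {ι A : Type*} [DecidableEq ι] [NonUnitalSemiring A] [Fintype ι]
    {f : ι → ι → A} (hf : IsOrderZeroMatrixUnits f) {x : A} {j i : ι} (hx : Commute x (f j i))
    (k : ι) : f j i * x * f i k = x * (∑ i, f i i) * f j k := by
  rw [← hx.eq, mul_assoc, hf.mul_eq_sum_diag_mul, mul_assoc]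

end IsOrderZeroMatrixUnits

/-- The algebraic relations (R1)–(R4) of the dimension drop algebra `I_{n,n+1}`, over an arbitrary
finite index type in which `o` plays the role of the first index. -/
structure IsDimensionDrop {ι B : Type*} [DecidableEq ι] [Fintype ι] [Ring B] [StarRing B]
    (o : ι) (f : ι → ι → B) (s : B) : Prop extends IsOrderZeroMatrixUnits f where
  star_apply : ∀ j k, star (f j k) = f k j
  diag_mul : f o o * s = s
  sum_diag_add : ∑ j, f j j + star s * s = 1

/-- The element `b` of the paper. A fibre of the dimension drop algebra is obtained by making it a
scalar. -/
def dimensionDropCenter {ι B : Type*} [Fintype ι] [Ring B] [StarRing B]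
    (o : ι) (f : ι → ι → B) (s : B) : B :=
  star s * s + ∑ j, f j o * s * star s * f o j

namespace IsDimensionDrop

variable {ι B : Type*} [DecidableEq ι] [Fintype ι] [Ring B] [StarRing B]
  {o : ι} {f : ι → ι → B} {s : B}

theorem sum_diag_eq (h : IsDimensionDrop o f s) : ∑ j, f j j = 1 - star s * s :=
  eq_sub_of_add_eq h.sum_diag_add

theorem star_mul_self_eq (h : IsDimensionDrop o f s) : star s * s = 1 - ∑ j, f j j :=
  eq_sub_of_add_eq' h.sum_diag_add

theorem commute_star_mul_self (h : IsDimensionDrop o f s) (j k : ι) :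
    Commute (star s * s) (f j k) := by
  rw [h.star_mul_self_eq]
  exact (Commute.one_left _).sub_left (h.commute_sum_diag j k)

theorem star_mul_self_mul_self (h : IsDimensionDrop o f s) : star s * s * s = 0 := by
  have sum_diag_mul_self : (∑ j, f j j) * s = s := by
    calc (∑ j, f j j) * s = (∑ j, f j j) * f o o * s := by rw [mul_assoc, h.diag_mul]
      _ = s := by rw [h.sum_diag_mul, mul_assoc, h.diag_mul, h.diag_mul]
  rw [h.star_mul_self_eq, sub_mul, one_mul, sum_diag_mul_self, sub_self]

theorem apply_mul_center (h : IsDimensionDrop o f s) (k : ι) :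
    f o k * dimensionDropCenter o f s = star s * s * f o k + s * star s * f o k := by
  have off_diag (j : ι) (hjk : j ≠ k) : f o k * (f j o * s * star s * f o j) = 0 := by
    simp only [← mul_assoc, h.mul_of_ne hjk.symm, zero_mul]
  have diag : f o k * (f k o * s * star s * f o k) = s * star s * f o k := by
    calc f o k * (f k o * s * star s * f o k)
        = f o k * f k o * s * star s * f o k := by simp only [mul_assoc]
      _ = s * star s * f o k := by rw [h.mul_same, mul_assoc (f o o), h.diag_mul, h.diag_mul]
  rw [dimensionDropCenter, mul_add, (h.commute_star_mul_self o k).eq, mul_sum,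
    Fintype.sum_eq_single k off_diag, diag]

section ScalarCenter

variable {R : Type*} [CommRing R] [Algebra R B] {t : R}

theorem mul_star_mul_apply (h : IsDimensionDrop o f s)
    (hb : dimensionDropCenter o f s = t • 1) (k : ι) :
    s * star s * f o k = (t • 1 - star s * s) * f o k := by
  have h_center := h.apply_mul_center k
  rw [hb, mul_smul_comm, mul_one] at h_center
  rw [sub_mul, smul_mul_assoc, one_mul, h_center, add_sub_cancel_left]

theorem mul_star_mul_self (h : IsDimensionDrop o f s)
    (hb : dimensionDropCenter o f s = t • 1) : s * (star s * s) = t • s := by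
  calc s * (star s * s) = s * star s * f o o * s := by simp only [mul_assoc, h.diag_mul]
    _ = (t • 1 - star s * s) * s := by rw [h.mul_star_mul_apply hb, mul_assoc, h.diag_mul]
    _ = t • s := by rw [sub_mul, h.star_mul_self_mul_self, sub_zero, smul_mul_assoc, one_mul]

theorem star_mul_self_mul_sum_diag (h : IsDimensionDrop o f s)
    (hb : dimensionDropCenter o f s = t • 1) :
    star s * s * ∑ j, f j j = (1 - t) • (star s * s) := by
  rw [h.sum_diag_eq, mul_sub, mul_one, mul_assoc, h.mul_star_mul_self hb, mul_smul_comm,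
    sub_smul, one_smul]

theorem apply_mul_star_mul_self_mul_apply (h : IsDimensionDrop o f s)
    (hb : dimensionDropCenter o f s = t • 1) (j i k : ι) :
    f j i * (star s * s) * f i k = (1 - t) • (star s * s * f j k) := by
  rw [h.mul_mul_of_commute (h.commute_star_mul_self j i), h.star_mul_self_mul_sum_diag hb,
    smul_mul_assoc]

theorem apply_mul_mul_star_mul_apply (h : IsDimensionDrop o f s)
    (hb : dimensionDropCenter o f s = t • 1) (j k : ι) :
    f j o * (s * star s) * f o k = (t • 1 - star s * s) * f j k := by
  have commute_apply : Commute (t • 1 - star s * s) (f j o) :=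
    ((Commute.one_left _).smul_left t).sub_left (h.commute_star_mul_self j o)
  have mul_sum_diag_self : (t • 1 - star s * s) * ∑ i, f i i = t • 1 - star s * s := by
    rw [sub_mul, h.star_mul_self_mul_sum_diag hb, smul_mul_assoc, one_mul, h.sum_diag_eq]
    module
  rw [mul_assoc, h.mul_star_mul_apply hb, ← mul_assoc, h.mul_mul_of_commute commute_apply,
    mul_sum_diag_self]

end ScalarCenter

end IsDimensionDrop

section Fiber

variable {ι K B : Type*} [Field K] [Ring B] [StarRing B] [Algebra K B]

/-- The elements `c_{j,k}` of the paper, in the fibre `b = t`. -/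
def fiberMatrix (t : K) (o : ι) (f : ι → ι → B) (s : B) (j k : ι) : B :=
  (t - t ^ 2)⁻¹ • (s * f o j * star s * f o k)

/-- The elements `d_l` of the paper, in the fibre `b = t`; the argument `r` stands for `t^{1/2}`,
so that no square root on `K` is needed. -/
def fiberVector (r t : K) (o : ι) (f : ι → ι → B) (s : B) (l : ι) : B :=
  (r * (1 - t))⁻¹ • (s * f o l)

theorem fiberMatrix_eq_fiberVector_mul {r t : K} (hrt : r ^ 2 = t) (o : ι) (f : ι → ι → B)
    (s : B) (j k : ι) :
    fiberMatrix t o f s j k = r⁻¹ • (fiberVector r t o f s j * (star s * f o k)) := by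
  have scalar_eq : (t - t ^ 2)⁻¹ = r⁻¹ * (r * (1 - t))⁻¹ := by
    rw [← mul_inv, ← hrt]
    ring
  rw [fiberMatrix, fiberVector, scalar_eq, smul_mul_assoc, smul_smul, ← mul_assoc]

namespace IsDimensionDrop

variable [StarRing K] [StarModule K B] [DecidableEq ι] [Fintype ι]
  {o : ι} {f : ι → ι → B} {s : B} {r t : K}

theorem star_fiberMatrix (h : IsDimensionDrop o f s) (hr : IsSelfAdjoint r) (hrt : r ^ 2 = t)
    (j k : ι) :
    star (fiberMatrix t o f s j k) = r⁻¹ • (f k o * s * star (fiberVector r t o f s j)) := by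
  rw [fiberMatrix_eq_fiberVector_mul hrt, star_smul, hr.inv₀.star_eq, star_mul, star_mul,
    star_star, h.star_apply]

theorem star_fiberVector (h : IsDimensionDrop o f s) (hr : IsSelfAdjoint r) (hrt : r ^ 2 = t)
    (l : ι) : star (fiberVector r t o f s l) = (r * (1 - t))⁻¹ • (f l o * star s) := by
  have scalar_selfAdjoint : IsSelfAdjoint (r * (1 - t)) :=
    hr.mul ((IsSelfAdjoint.one K).sub (hrt ▸ hr.pow 2))
  rw [fiberVector, star_smul, scalar_selfAdjoint.inv₀.star_eq, star_mul, h.star_apply]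

theorem smul_star_fiberVector_mul_fiberVector (h : IsDimensionDrop o f s)
    (hb : dimensionDropCenter o f s = t • 1) (hr : IsSelfAdjoint r) (hrt : r ^ 2 = t)
    (ht1 : t ≠ 1) (j k : ι) :
    (1 - t) • (star (fiberVector r t o f s j) * fiberVector r t o f s k) =
      t⁻¹ • (star s * s * f j k) := by
  have corner : f j o * star s * (s * f o k) = (1 - t) • (star s * s * f j k) := by
    rw [← h.apply_mul_star_mul_self_mul_apply hb j o k]
    simp only [mul_assoc]
  have h1t : 1 - t ≠ 0 := sub_ne_zero.mpr ht1.symm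
  have scalar_eq : (1 - t) * ((r * (1 - t))⁻¹ * (r * (1 - t))⁻¹) * (1 - t) = t⁻¹ := by
    rw [← mul_inv, mul_mul_mul_comm, ← sq r, hrt]
    field_simp
  rw [h.star_fiberVector hr hrt, fiberVector, smul_mul_smul_comm, corner, smul_smul, smul_smul,
    scalar_eq]

theorem sum_star_fiberVector_mul_fiberVector (h : IsDimensionDrop o f s)
    (hb : dimensionDropCenter o f s = t • 1) (hr : IsSelfAdjoint r) (hrt : r ^ 2 = t)
    (ht1 : t ≠ 1) :
    ∑ l, star (fiberVector r t o f s l) * fiberVector r t o f s l = t⁻¹ • (star s * s) := by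
  apply smul_right_injective B (sub_ne_zero.mpr ht1.symm)
  simp only [smul_sum, h.smul_star_fiberVector_mul_fiberVector hb hr hrt ht1]
  rw [← smul_sum, ← mul_sum, h.star_mul_self_mul_sum_diag hb, smul_comm]

theorem mul_sum_star_fiberVector_mul_fiberVector (h : IsDimensionDrop o f s)
    (hb : dimensionDropCenter o f s = t • 1) (hr : IsSelfAdjoint r) (hrt : r ^ 2 = t)
    (ht0 : t ≠ 0) (ht1 : t ≠ 1) :
    s * ∑ l, star (fiberVector r t o f s l) * fiberVector r t o f s l = s := by
  rw [h.sum_star_fiberVector_mul_fiberVector hb hr hrt ht1, mul_smul_comm,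
    h.mul_star_mul_self hb, inv_smul_smul₀ ht0]

theorem sum_star_fiberMatrix_mul_fiberVector (h : IsDimensionDrop o f s)
    (hb : dimensionDropCenter o f s = t • 1) (hr : IsSelfAdjoint r) (hrt : r ^ 2 = t)
    (ht0 : t ≠ 0) (ht1 : t ≠ 1) (j : ι) :
    ∑ l, star (fiberMatrix t o f s l j) * fiberVector r t o f s l = r⁻¹ • (f j o * s) := by
  simp only [h.star_fiberMatrix hr hrt, smul_mul_assoc, mul_assoc]
  rw [← smul_sum, ← mul_sum, ← mul_sum,
    h.mul_sum_star_fiberVector_mul_fiberVector hb hr hrt ht0 ht1]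

theorem sum_star_fiberMatrix_mul_fiberMatrix (h : IsDimensionDrop o f s)
    (hb : dimensionDropCenter o f s = t • 1) (hr : IsSelfAdjoint r) (hrt : r ^ 2 = t)
    (ht0 : t ≠ 0) (ht1 : t ≠ 1) (j k : ι) :
    ∑ l, star (fiberMatrix t o f s l j) * fiberMatrix t o f s l k =
      t⁻¹ • ((t • 1 - star s * s) * f j k) := by
  calc ∑ l, star (fiberMatrix t o f s l j) * fiberMatrix t o f s l k
      = r⁻¹ • ((∑ l, star (fiberMatrix t o f s l j) * fiberVector r t o f s l) *
          (star s * f o k)) := by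
        simp only [fiberMatrix_eq_fiberVector_mul hrt o f s _ k, mul_smul_comm, ← mul_assoc,
          smul_sum, sum_mul]
    _ = (r ^ 2)⁻¹ • (f j o * (s * star s) * f o k) := by
        rw [h.sum_star_fiberMatrix_mul_fiberVector hb hr hrt ht0 ht1, smul_mul_assoc, smul_smul,
          ← mul_inv, ← sq]
        simp only [mul_assoc]
    _ = t⁻¹ • ((t • 1 - star s * s) * f j k) := by
        rw [hrt, h.apply_mul_mul_star_mul_apply hb]

end IsDimensionDrop

end Fiber

theorem stmt18_general {ι K B : Type*} [Fintype ι] [DecidableEq ι] [Field K] [StarRing K]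
    [Ring B] [StarRing B] [Algebra K B] [StarModule K B] {o : ι} {f : ι → ι → B} {s : B}
    {r t : K} (h : IsDimensionDrop o f s) (hb : dimensionDropCenter o f s = t • 1)
    (hr : IsSelfAdjoint r) (hrt : r ^ 2 = t) (ht0 : t ≠ 0) (ht1 : t ≠ 1) :
    s = r • ∑ j, star (fiberMatrix t o f s j o) * fiberVector r t o f s j ∧
      ∀ j k, f j k = ∑ l, star (fiberMatrix t o f s l j) * fiberMatrix t o f s l k
        + (1 - t) • (star (fiberVector r t o f s j) * fiberVector r t o f s k) := by
  have hr0 : r ≠ 0 := pow_ne_zero_iff two_ne_zero |>.mp (hrt ▸ ht0)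
  refine ⟨?_, fun j k ↦ ?_⟩
  · rw [h.sum_star_fiberMatrix_mul_fiberVector hb hr hrt ht0 ht1, h.diag_mul, smul_inv_smul₀ hr0]
  · rw [h.sum_star_fiberMatrix_mul_fiberMatrix hb hr hrt ht0 ht1,
      h.smul_star_fiberVector_mul_fiberVector hb hr hrt ht1, ← smul_add, ← add_mul,
      sub_add_cancel, smul_mul_assoc, one_mul, inv_smul_smul₀ ht0]

/-- Under the relations (R1)–(R4) of the dimension drop algebra
`I_{n,n+1}` (index `⟨0, hn⟩` playing the role of the index `1` of the paper), if moreover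
`b = s* s + ∑ⱼ f_{j,1} s s* f_{1,j} = t·1` with `0 < t < 1`, then with
`c j k = (t − t²)⁻¹ s f_{1,j} s* f_{1,k}` and `d l = (√t (1 − t))⁻¹ s f_{1,l}` one has
`s = √t ∑ⱼ c_{j,1}* d_j` and `f_{j,k} = ∑ₗ c_{l,j}* c_{l,k} + (1 − t) d_j* d_k`. -/
theorem stmt18 {B : Type*} [NormedRing B] [StarRing B] [CStarRing B]
    [NormedAlgebra ℂ B] [CompleteSpace B] [StarModule ℂ B]
    (n : ℕ) (hn : 1 ≤ n) (s : B) (f : Fin n → Fin n → B)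
    (hs : ‖s‖ ≤ 1) (hf : ∀ j k, ‖f j k‖ ≤ 1)
    (R1 : ∀ j k, star (f j k) = f k j)
    (R2 : ∀ j k l m, f j k * f l m = if k = l then f j j * f j m else 0)
    (R3 : f ⟨0, hn⟩ ⟨0, hn⟩ * s = s)
    (R4 : ∑ j, f j j + star s * s = 1)
    (t : ℝ) (ht0 : 0 < t) (ht1 : t < 1)
    (hb : star s * s + ∑ j, f j ⟨0, hn⟩ * s * star s * f ⟨0, hn⟩ j = (t : ℂ) • 1)
    (c : Fin n → Fin n → B) (d : Fin n → B)
    (hc : ∀ j k, c j k = ((t - t ^ 2 : ℝ) : ℂ)⁻¹ • (s * f ⟨0, hn⟩ j * star s * f ⟨0, hn⟩ k))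
    (hd : ∀ l, d l = ((Real.sqrt t * (1 - t) : ℝ) : ℂ)⁻¹ • (s * f ⟨0, hn⟩ l)) :
    s = ((Real.sqrt t : ℝ) : ℂ) • ∑ j, star (c j ⟨0, hn⟩) * d j ∧
      ∀ j k, f j k = ∑ l, star (c l j) * c l k
        + ((1 - t : ℝ) : ℂ) • (star (d j) * d k) := by
  obtain rfl : c = fiberMatrix (t : ℂ) ⟨0, hn⟩ f s := by ext j k; simp [hc, fiberMatrix]
  obtain rfl : d = fiberVector (√t : ℂ) t ⟨0, hn⟩ f s := by ext l; simp [hd, fiberVector]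
  simpa using stmt18_general ⟨⟨R2⟩, R1, R3, R4⟩ hb (Complex.conj_ofReal √t)
    (mod_cast Real.sq_sqrt ht0.le) (mod_cast ht0.ne') (mod_cast ht1.ne)
end
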